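/- arXiv:1310.8110 — 5 statements merged into one kernel-verified Lean document; each statement's English description precedes it below -/
import Mathlib

section
/- Let p ≥ 1 be an integer, q = p + 1, let Σ be a symmetric positive definite p × p real matrix, and let 0 < b < q. Then for every x ∈ ℝ^p, exp(−(1/2)·xᵀΣ⁻¹x) ≤ exp(−(q − b)/2) · (q/b)^{q/2} · (1 + xᵀ(bΣ)⁻¹x)^{−q/2}. That is, the unnormalized multivariate normal density with covariance Σ is dominated by exp(−(q−b)/2)(q/b)^{q/2} times the unnormalized multivariate Cauchy density with scatter matrix Ψ = bΣ. -/
open Matrix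

/-!
Both densities depend on `x` only through `t = xᵀ Σ⁻¹ x ≥ 0`. With `y = (b + t) / q`, the bound is
the tangent line inequality `y ≤ exp (y - 1)` raised to the power `q / 2`. The constant is sharp
for `b ≤ q`, because equality holds at `y = 1`, that is, on the ellipsoid `t = q - b`.
-/

lemma rpow_le_exp_mul_sub_one {y s : ℝ} (hy : 0 ≤ y) (hs : 0 ≤ s) :
    y ^ s ≤ Real.exp (s * (y - 1)) :=
  calc
    y ^ s ≤ Real.exp (y - 1) ^ s :=
      Real.rpow_le_rpow hy (by linarith [Real.add_one_le_exp (y - 1)]) hs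
    _ = Real.exp (s * (y - 1)) := by rw [← Real.exp_mul, mul_comm]

lemma exp_neg_mul_sub_one_le_rpow_neg {y s : ℝ} (hy : 0 < y) (hs : 0 ≤ s) :
    Real.exp (-(s * (y - 1))) ≤ y ^ (-s) := by
  rw [Real.exp_neg, Real.rpow_neg hy.le]
  exact inv_anti₀ (Real.rpow_pos_of_pos hy s) (rpow_le_exp_mul_sub_one hy.le hs)

lemma exp_neg_half_mul_le_mul_rpow_one_add_div {b q t : ℝ} (hb : 0 < b) (hq : 0 < q)
    (hbt : 0 < b + t) :
    Real.exp (-(1 / 2 * t)) ≤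
      Real.exp (-(q - b) / 2) * (q / b) ^ (q / 2) * (1 + t / b) ^ (-(q / 2)) := by
  have one_add_div_pos : 0 < 1 + t / b := by
    rw [one_add_div hb.ne']
    exact div_pos hbt hb
  have ratio_eq : (b + t) / q = (q / b)⁻¹ * (1 + t / b) := by field_simp
  calc
    Real.exp (-(1 / 2 * t))
        = Real.exp (-(q - b) / 2) * Real.exp (-(q / 2 * ((b + t) / q - 1))) := by
      rw [← Real.exp_add]
      congr 1
      field_simp
      ring
    _ ≤ Real.exp (-(q - b) / 2) * ((b + t) / q) ^ (-(q / 2)) := by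
      gcongr
      exact exp_neg_mul_sub_one_le_rpow_neg (div_pos hbt hq) (half_pos hq).le
    _ = Real.exp (-(q - b) / 2) * (q / b) ^ (q / 2) * (1 + t / b) ^ (-(q / 2)) := by
      rw [ratio_eq, Real.mul_rpow (by positivity) one_add_div_pos.le,
        Real.inv_rpow (by positivity), Real.rpow_neg (by positivity), inv_inv, mul_assoc]

lemma dotProduct_inv_smul_mulVec {n K : Type*} [Fintype n] [DecidableEq n] [Field K]
    {A : Matrix n n K} (hA : IsUnit A.det) {c : K} (hc : c ≠ 0) (x y : n → K) :
    x ⬝ᵥ (c • A)⁻¹ *ᵥ y = (x ⬝ᵥ A⁻¹ *ᵥ y) / c := by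
  have inv_smul_eq : (c • A)⁻¹ = c⁻¹ • A⁻¹ := Matrix.inv_smul' A (Units.mk0 c hc) hA
  rw [inv_smul_eq, smul_mulVec, dotProduct_smul, smul_eq_mul, inv_mul_eq_div]

theorem stmt_2_general {n : Type*} [Fintype n] [DecidableEq n] {S : Matrix n n ℝ}
    (hS : S.PosDef) {b q : ℝ} (hb : 0 < b) (hq : 0 < q) (x : n → ℝ) :
    Real.exp (-(1 / 2 * (x ⬝ᵥ S⁻¹ *ᵥ x))) ≤
      Real.exp (-(q - b) / 2) * (q / b) ^ (q / 2) *
        (1 + x ⬝ᵥ (b • S)⁻¹ *ᵥ x) ^ (-(q / 2)) := by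
  have quadForm_nonneg : 0 ≤ x ⬝ᵥ S⁻¹ *ᵥ x := hS.inv.posSemidef.dotProduct_mulVec_nonneg x
  rw [dotProduct_inv_smul_mulVec hS.det_pos.ne'.isUnit hb.ne']
  exact exp_neg_half_mul_le_mul_rpow_one_add_div hb hq (add_pos_of_pos_of_nonneg hb quadForm_nonneg)

/-- the unnormalized `N_p(0, Σ)` density is dominated by
`exp(−(q−b)/2)(q/b)^(q/2)` times the unnormalized multivariate Cauchy density with
scatter matrix `Ψ = bS`, where `q = p + 1` and `0 < b < q`. -/
theorem stmt_2 (p : ℕ) (hp : 1 ≤ p) (q : ℝ) (hq : q = p + 1)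
    (S : Matrix (Fin p) (Fin p) ℝ) (hSsymm : S.IsSymm) (hS : S.PosDef)
    (b : ℝ) (hb : 0 < b) (hbq : b < q) :
    ∀ x : Fin p → ℝ,
      Real.exp (-(1 / 2 * (x ⬝ᵥ S⁻¹.mulVec x))) ≤
        Real.exp (-(q - b) / 2) * (q / b) ^ (q / 2) *
          (1 + x ⬝ᵥ (b • S)⁻¹.mulVec x) ^ (-(q / 2)) :=
  stmt_2_general hS hb (hb.trans hbq)
end

section
/- Let q ≥ 2 be an integer, let A be a symmetric positive semidefinite q × q real matrix, let 0 < b < q, and set Ω = I_q + (2/b)·A. Then for every unit vector x ∈ ℝ^q (i.e. xᵀx = 1), exp(−xᵀAx) ≤ exp(−(q − b)/2)·(q/b)^{q/2}·(xᵀΩx)^{−q/2}. That is, the unnormalized Bingham density with parameter matrix A is dominated on the unit sphere by exp(−(q−b)/2)(q/b)^{q/2} times the unnormalized angular central Gaussian density with parameter matrix Ω. -/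
open Matrix

/-!
On the unit sphere `xᵀAx = (b / 2) (w - 1)` with `w = xᵀΩx`, so the claim only involves the
number `w`: it says that `w ^ (q / 2) * exp (-(b / 2) w)` is at most its value at the maximiser
`w = q / b`. In the variable `u = w / (q / b)` this is a power of `u ≤ exp (u - 1)`.
-/

theorem rpow_le_exp_mul_sub_one_s5 {u r : ℝ} (hu : 0 ≤ u) (hr : 0 ≤ r) :
    u ^ r ≤ Real.exp (r * (u - 1)) :=
  calc u ^ r ≤ Real.exp (u - 1) ^ r :=
        Real.rpow_le_rpow hu (by simpa using Real.add_one_le_exp (u - 1)) hr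
    _ = Real.exp (r * (u - 1)) := by rw [← Real.exp_mul, mul_comm]

theorem rpow_mul_exp_neg_mul_le {w r c : ℝ} (hw : 0 ≤ w) (hr : 0 < r) (hc : 0 < c) :
    w ^ r * Real.exp (-(c * w)) ≤ (r / c) ^ r * Real.exp (-r) := by
  have hrc : 0 < r / c := div_pos hr hc
  have scaled : (w / (r / c)) ^ r ≤ Real.exp (c * w - r) := by
    convert rpow_le_exp_mul_sub_one_s5 (div_nonneg hw hrc.le) hr.le using 2
    field_simp
  rw [Real.div_rpow hw hrc.le, div_le_iff₀' (Real.rpow_pos_of_pos hrc r)] at scaled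
  calc w ^ r * Real.exp (-(c * w))
      ≤ (r / c) ^ r * Real.exp (c * w - r) * Real.exp (-(c * w)) := by gcongr
    _ = (r / c) ^ r * Real.exp (-r) := by
        rw [mul_assoc, ← Real.exp_add]
        ring_nf

theorem dotProduct_one_add_smul_mulVec {n R : Type*} [Fintype n] [DecidableEq n] [CommSemiring R]
    (A : Matrix n n R) (c : R) (x : n → R) :
    x ⬝ᵥ (1 + c • A) *ᵥ x = x ⬝ᵥ x + c * (x ⬝ᵥ A *ᵥ x) := by
  rw [add_mulVec, one_mulVec, smul_mulVec, dotProduct_add, dotProduct_smul, smul_eq_mul]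

theorem stmt_5_general {n : Type*} [Fintype n] [DecidableEq n] {A Ω : Matrix n n ℝ} {b p : ℝ}
    (hb : 0 < b) (hp : 0 < p) (hΩ : Ω = 1 + (2 / b) • A) {x : n → ℝ} (hx : x ⬝ᵥ x = 1)
    (hΩx : 0 < x ⬝ᵥ Ω *ᵥ x) :
    Real.exp (-(x ⬝ᵥ A *ᵥ x)) ≤
      Real.exp (-(p - b) / 2) * (p / b) ^ (p / 2) * (x ⬝ᵥ Ω *ᵥ x) ^ (-(p / 2)) := by
  have quadForm_eq : x ⬝ᵥ A *ᵥ x = b / 2 * (x ⬝ᵥ Ω *ᵥ x) - b / 2 := by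
    rw [hΩ, dotProduct_one_add_smul_mulVec, hx]
    field_simp
    ring
  generalize x ⬝ᵥ Ω *ᵥ x = w at hΩx quadForm_eq ⊢
  have bound := rpow_mul_exp_neg_mul_le hΩx.le (half_pos hp) (half_pos hb)
  rw [div_div_div_cancel_right₀ two_ne_zero] at bound
  rw [quadForm_eq, Real.rpow_neg hΩx.le, ← div_eq_mul_inv,
    le_div_iff₀' (Real.rpow_pos_of_pos hΩx _)]
  calc w ^ (p / 2) * Real.exp (-(b / 2 * w - b / 2))
      = Real.exp (b / 2) * (w ^ (p / 2) * Real.exp (-(b / 2 * w))) := by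
        rw [mul_left_comm, ← Real.exp_add]
        ring_nf
    _ ≤ Real.exp (b / 2) * ((p / b) ^ (p / 2) * Real.exp (-(p / 2))) := by gcongr
    _ = Real.exp (-(p - b) / 2) * (p / b) ^ (p / 2) := by
        rw [mul_left_comm, ← Real.exp_add, mul_comm]
        ring_nf

/-- the unnormalized Bingham density `exp(−xᵀAx)` on the unit sphere is
dominated by `exp(−(q−b)/2)(q/b)^(q/2)` times the unnormalized angular central Gaussian
density `(xᵀΩx)^(−q/2)` with `Ω = I + (2/b)A`, for `0 < b < q`. -/
theorem stmt_5 (q : ℕ) (hq : 2 ≤ q) (A : Matrix (Fin q) (Fin q) ℝ)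
    (hA : A.PosSemidef) (b : ℝ) (hb : 0 < b) (hbq : b < q)
    (Ω : Matrix (Fin q) (Fin q) ℝ) (hΩ : Ω = 1 + (2 / b) • A) :
    ∀ x : Fin q → ℝ, x ⬝ᵥ x = 1 →
      Real.exp (-(x ⬝ᵥ A.mulVec x)) ≤
        Real.exp (-((q : ℝ) - b) / 2) * ((q : ℝ) / b) ^ ((q : ℝ) / 2) *
          (x ⬝ᵥ Ω.mulVec x) ^ (-((q : ℝ) / 2)) := by
  intro x hx
  have hΩ_posDef : Ω.PosDef := hΩ ▸ PosDef.one.add_posSemidef (hA.smul (by positivity))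
  have hx0 : x ≠ 0 := by rintro rfl; simp at hx
  exact stmt_5_general hb (hb.trans hbq) hΩ hx (hΩ_posDef.dotProduct_mulVec_pos hx0)
end

section
/- Let 1 ≤ r ≤ q be integers, let A be a symmetric positive semidefinite q × q real matrix, let 0 < b < q, and set Ω = I_q + (2/b)·A. Then for every q × r real matrix X with orthonormal columns (XᵀX = I_r), exp(−tr(XᵀAX)) ≤ [exp(−(q − b)/2)·(q/b)^{q/2}]^r · det(XᵀΩX)^{−q/2}, where moreover det(XᵀΩX) = det(I_r + (2/b)·XᵀAX). That is, the unnormalized balanced matrix Bingham density on the Stiefel manifold V_{r,q} is dominated by the r-th power of the scalar Bingham–ACG bound times the unnormalized matrix angular central Gaussian density with parameter Ω. -/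
open Matrix

/-! For `a, c > 0` the function `x ↦ x ^ a * exp (-c * x)` on `[0, ∞)` attains its maximum
`(a / c) ^ a * exp (-a)` at `x = a / c`. Multiplying this bound over the eigenvalues of the positive
definite matrix `Xᴴ * Ω * X = 1 + (2 / b) • (Xᴴ * A * X)` compares its determinant with its trace,
and the exponents `a = q / 2` and `c = b / 2` give the comparison of the two densities. -/

theorem rpow_le_mul_exp_mul {a c x : ℝ} (ha : 0 < a) (hc : 0 < c) (hx : 0 ≤ x) :
    x ^ a ≤ (a / c) ^ a * Real.exp (-a) * Real.exp (c * x) := by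
  have le_exp : x ≤ a / c * Real.exp (c / a * x - 1) := by
    rw [← inv_div c a, le_inv_mul_iff₀ (by positivity)]
    linarith [Real.add_one_le_exp (c / a * x - 1)]
  calc x ^ a ≤ (a / c * Real.exp (c / a * x - 1)) ^ a := by gcongr
    _ = (a / c) ^ a * Real.exp ((c / a * x - 1) * a) := by
        rw [Real.mul_rpow (by positivity) (by positivity), ← Real.exp_mul]
    _ = (a / c) ^ a * Real.exp (-a) * Real.exp (c * x) := by
        rw [mul_assoc, ← Real.exp_add]
        congr 2
        field_simp
        ring

section RCLike

open scoped ComplexOrder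

variable {𝕜 m n : Type*} [RCLike 𝕜] [Fintype m] [DecidableEq m] [Fintype n] [DecidableEq n]

theorem re_det_rpow_le_mul_exp_trace {M : Matrix m m 𝕜} (hM : M.PosSemidef) {a c : ℝ}
    (ha : 0 < a) (hc : 0 < c) :
    RCLike.re M.det ^ a ≤
      ((a / c) ^ a * Real.exp (-a)) ^ Fintype.card m * Real.exp (c * RCLike.re M.trace) := by
  have det_eq : RCLike.re M.det = ∏ i, hM.1.eigenvalues i := by
    rw [hM.1.det_eq_prod_eigenvalues, ← RCLike.ofReal_prod, RCLike.ofReal_re]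
  have trace_eq : RCLike.re M.trace = ∑ i, hM.1.eigenvalues i := by
    rw [hM.1.trace_eq_sum_eigenvalues, ← RCLike.ofReal_sum, RCLike.ofReal_re]
  calc RCLike.re M.det ^ a = ∏ i, hM.1.eigenvalues i ^ a := by
        rw [det_eq, Real.finsetProd_rpow _ _ fun i _ => hM.eigenvalues_nonneg i]
    _ ≤ ∏ i, (a / c) ^ a * Real.exp (-a) * Real.exp (c * hM.1.eigenvalues i) :=
        Finset.prod_le_prod (fun i _ => Real.rpow_nonneg (hM.eigenvalues_nonneg i) a)
          fun i _ => rpow_le_mul_exp_mul ha hc (hM.eigenvalues_nonneg i)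
    _ = ((a / c) ^ a * Real.exp (-a)) ^ Fintype.card m * Real.exp (c * RCLike.re M.trace) := by
        rw [Finset.prod_mul_distrib, Finset.prod_const, Finset.card_univ, ← Real.exp_sum,
          ← Finset.mul_sum, ← trace_eq]

theorem exp_neg_re_trace_le_mul_re_det_rpow {b p : ℝ} (hb : 0 < b) (hp : 0 < p) {B : Matrix m m 𝕜}
    (hB : (1 + (2 / b) • B).PosDef) :
    Real.exp (-RCLike.re B.trace) ≤
      (Real.exp (-(p - b) / 2) * (p / b) ^ (p / 2)) ^ Fintype.card m *
        RCLike.re (1 + (2 / b) • B).det ^ (-(p / 2)) := by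
  set M := 1 + (2 / b) • B with hM
  have det_pos : 0 < RCLike.re M.det := (RCLike.pos_iff.mp hB.det_pos).1
  have trace_eq : b / 2 * RCLike.re M.trace = Fintype.card m * (b / 2) + RCLike.re B.trace := by
    rw [hM, trace_add, trace_smul, trace_one, map_add, RCLike.smul_re, RCLike.natCast_re]
    field_simp
  have det_rpow_le : RCLike.re M.det ^ (p / 2) ≤
      (Real.exp (-(p - b) / 2) * (p / b) ^ (p / 2)) ^ Fintype.card m *
        Real.exp (RCLike.re B.trace) := by
    calc RCLike.re M.det ^ (p / 2)
        ≤ ((p / 2 / (b / 2)) ^ (p / 2) * Real.exp (-(p / 2))) ^ Fintype.card m *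
            Real.exp (b / 2 * RCLike.re M.trace) :=
          re_det_rpow_le_mul_exp_trace hB.posSemidef (half_pos hp) (half_pos hb)
      _ = ((p / b) ^ (p / 2) * (Real.exp (-(p / 2)) * Real.exp (b / 2))) ^ Fintype.card m *
            Real.exp (RCLike.re B.trace) := by
          rw [trace_eq, Real.exp_add, Real.exp_nat_mul, div_div_div_cancel_right₀ two_ne_zero]
          ring
      _ = (Real.exp (-(p - b) / 2) * (p / b) ^ (p / 2)) ^ Fintype.card m *
            Real.exp (RCLike.re B.trace) := by
          rw [← Real.exp_add, mul_comm ((p / b) ^ (p / 2))]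
          ring_nf
  rwa [Real.exp_neg, Real.rpow_neg det_pos.le, ← div_eq_mul_inv, le_div_iff₀ (by positivity),
    inv_mul_le_iff₀ (Real.exp_pos _), mul_comm (Real.exp (RCLike.re B.trace))]

theorem stmt_10_general {b p : ℝ} (hb : 0 < b) (hp : 0 < p) {A Ω : Matrix n n 𝕜}
    (hΩ : Ω = 1 + (2 / b) • A) (hΩ_pos : Ω.PosDef) {X : Matrix n m 𝕜} (hX : Xᴴ * X = 1) :
    Real.exp (-RCLike.re (Xᴴ * A * X).trace) ≤
      (Real.exp (-(p - b) / 2) * (p / b) ^ (p / 2)) ^ Fintype.card m *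
        RCLike.re (Xᴴ * Ω * X).det ^ (-(p / 2)) ∧
    (Xᴴ * Ω * X).det = (1 + (2 / b) • (Xᴴ * A * X)).det := by
  have compression_eq : Xᴴ * Ω * X = 1 + (2 / b) • (Xᴴ * A * X) := by
    rw [hΩ, Matrix.mul_add, Matrix.add_mul, Matrix.mul_one, hX, Matrix.mul_smul, Matrix.smul_mul]
  have mulVec_injective : Function.Injective X.mulVec :=
    Function.LeftInverse.injective (g := Xᴴ.mulVec) fun v => by
      rw [mulVec_mulVec, hX, one_mulVec]
  have compression_pos : (Xᴴ * Ω * X).PosDef := hΩ_pos.conjTranspose_mul_mul_same mulVec_injective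
  rw [compression_eq] at compression_pos ⊢
  exact ⟨exp_neg_re_trace_le_mul_re_det_rpow hb hp compression_pos, rfl⟩

end RCLike

/-- the unnormalized balanced matrix Bingham density
`exp(−tr(XᵀAX))` on the Stiefel manifold `V_{r,q}` is dominated by the `r`-th power of
the scalar Bingham–ACG bound times the unnormalized matrix angular central Gaussian
density `det(XᵀΩX)^(−q/2)`, with `Ω = I + (2/b)A`; moreover
`det(XᵀΩX) = det(I_r + (2/b) XᵀAX)`. -/
theorem stmt_10 (r q : ℕ) (hr : 1 ≤ r) (hrq : r ≤ q)
    (A : Matrix (Fin q) (Fin q) ℝ) (hA : A.PosSemidef)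
    (b : ℝ) (hb : 0 < b) (hbq : b < q)
    (Ω : Matrix (Fin q) (Fin q) ℝ) (hΩ : Ω = 1 + (2 / b) • A) :
    ∀ X : Matrix (Fin q) (Fin r) ℝ, Xᵀ * X = 1 →
      Real.exp (-(Xᵀ * A * X).trace) ≤
        (Real.exp (-((q : ℝ) - b) / 2) * ((q : ℝ) / b) ^ ((q : ℝ) / 2)) ^ r *
          (Xᵀ * Ω * X).det ^ (-((q : ℝ) / 2)) ∧
      (Xᵀ * Ω * X).det = ((1 : Matrix (Fin r) (Fin r) ℝ) + (2 / b) • (Xᵀ * A * X)).det := by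
  intro X hX
  have hΩ_pos : Ω.PosDef := hΩ ▸ PosDef.one.add_posSemidef (hA.smul (by positivity))
  simpa using stmt_10_general hb (hb.trans hbq) hΩ hΩ_pos (X := X) (by simpa using hX)
end

section
/- Let x = (x₁, x₂, x₃, x₄)ᵀ ∈ ℝ⁴ be a unit vector, let M(x) be the 3 × 3 rotation matrix with rows (x₁²+x₂²−x₃²−x₄², −2(x₁x₄−x₂x₃), 2(x₁x₃+x₂x₄)); (2(x₁x₄+x₂x₃), x₁²+x₃²−x₂²−x₄², −2(x₁x₂−x₃x₄)); (−2(x₁x₃−x₂x₄), 2(x₁x₂+x₃x₄), x₁²+x₄²−x₂²−x₃²), let Δ = diag(δ₁, δ₂, δ₃), and let Λ = diag(0, 2(δ₂+δ₃), 2(δ₁+δ₃), 2(δ₁+δ₂)). Then tr(ΔᵀM(x)) = (δ₁ + δ₂ + δ₃) − xᵀΛx. Consequently, the unnormalized matrix Fisher density exp(tr(ΔᵀM(x))) on SO(3) equals exp(δ₁+δ₂+δ₃) times the unnormalized Bingham density exp(−xᵀΛx) on S₃. -/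
open Matrix

/-- The quadratic map from a unit vector `x ∈ ℝ⁴` to a `3 × 3` rotation matrix
implementing the accidental isomorphism `ℝP₃ = SO(3)`. -/
def quatToMatrix (x₁ x₂ x₃ x₄ : ℝ) : Matrix (Fin 3) (Fin 3) ℝ :=
  !![x₁^2 + x₂^2 - x₃^2 - x₄^2, -2*(x₁*x₄ - x₂*x₃), 2*(x₁*x₃ + x₂*x₄);
     2*(x₁*x₄ + x₂*x₃), x₁^2 + x₃^2 - x₂^2 - x₄^2, -2*(x₁*x₂ - x₃*x₄);
     -2*(x₁*x₃ - x₂*x₄), 2*(x₁*x₂ + x₃*x₄), x₁^2 + x₄^2 - x₂^2 - x₃^2]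

/-!
Both sides depend on `x` only through the four squares `xᵢ²`, since the trace against a diagonal
matrix sees only the diagonal of `M(x)`. Each diagonal entry is `|x|²` minus twice a sum of two
squares; collecting the coefficient of each `xᵢ²` in these corrections gives `xᵀΛx`, and the
remaining `(δ₁ + δ₂ + δ₃)|x|²` is constant on the sphere.
-/

section Diagonal

variable {n R : Type*} [Fintype n] [DecidableEq n]

theorem trace_diagonal_mul_eq_dotProduct_diag [NonUnitalNonAssocSemiring R]
    (d : n → R) (A : Matrix n n R) : (diagonal d * A).trace = d ⬝ᵥ A.diag := by
  simp only [trace, dotProduct, diag_apply, diagonal_mul]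

theorem dotProduct_diagonal_mulVec_self [CommSemiring R] (d v : n → R) :
    v ⬝ᵥ diagonal d *ᵥ v = d ⬝ᵥ v ^ 2 := by
  simp only [dotProduct, mulVec_diagonal, Pi.pow_apply, pow_two, mul_left_comm]

end Diagonal

theorem diag_quatToMatrix (x₁ x₂ x₃ x₄ : ℝ) :
    (quatToMatrix x₁ x₂ x₃ x₄).diag =
      ![(x₁ ^ 2 + x₂ ^ 2 + x₃ ^ 2 + x₄ ^ 2) - 2 * (x₃ ^ 2 + x₄ ^ 2),
        (x₁ ^ 2 + x₂ ^ 2 + x₃ ^ 2 + x₄ ^ 2) - 2 * (x₂ ^ 2 + x₄ ^ 2),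
        (x₁ ^ 2 + x₂ ^ 2 + x₃ ^ 2 + x₄ ^ 2) - 2 * (x₂ ^ 2 + x₃ ^ 2)] := by
  ext i
  match i with
  | 0 | 1 | 2 =>
    simp only [quatToMatrix, diag_apply, of_apply, cons_val]
    ring

theorem trace_diagonal_mul_quatToMatrix (x₁ x₂ x₃ x₄ δ₁ δ₂ δ₃ : ℝ) :
    (diagonal ![δ₁, δ₂, δ₃] * quatToMatrix x₁ x₂ x₃ x₄).trace =
      (δ₁ + δ₂ + δ₃) * (x₁ ^ 2 + x₂ ^ 2 + x₃ ^ 2 + x₄ ^ 2) -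
        ![x₁, x₂, x₃, x₄] ⬝ᵥ
          diagonal ![0, 2 * (δ₂ + δ₃), 2 * (δ₁ + δ₃), 2 * (δ₁ + δ₂)] *ᵥ ![x₁, x₂, x₃, x₄] := by
  rw [trace_diagonal_mul_eq_dotProduct_diag, diag_quatToMatrix, dotProduct_diagonal_mulVec_self]
  simp only [dotProduct, Fin.sum_univ_three, Fin.sum_univ_four, Pi.pow_apply, cons_val]
  ring

/-- with `Δ = diag(δ₁, δ₂, δ₃)` and
`Λ = diag(0, 2(δ₂+δ₃), 2(δ₁+δ₃), 2(δ₁+δ₂))`, for any unit vector `x ∈ ℝ⁴` one has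
`tr(Δᵀ M(x)) = (δ₁+δ₂+δ₃) − xᵀΛx`; hence the unnormalized matrix Fisher density on
`SO(3)` equals `exp(δ₁+δ₂+δ₃)` times the unnormalized Bingham density on `S₃`. -/
theorem stmt_13 (x₁ x₂ x₃ x₄ : ℝ) (hx : x₁^2 + x₂^2 + x₃^2 + x₄^2 = 1)
    (δ₁ δ₂ δ₃ : ℝ)
    (Δ : Matrix (Fin 3) (Fin 3) ℝ) (hΔ : Δ = Matrix.diagonal ![δ₁, δ₂, δ₃])
    (Λ : Matrix (Fin 4) (Fin 4) ℝ)
    (hΛ : Λ = Matrix.diagonal ![0, 2*(δ₂+δ₃), 2*(δ₁+δ₃), 2*(δ₁+δ₂)])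
    (x : Fin 4 → ℝ) (hxv : x = ![x₁, x₂, x₃, x₄]) :
    (Δᵀ * quatToMatrix x₁ x₂ x₃ x₄).trace = (δ₁ + δ₂ + δ₃) - x ⬝ᵥ Λ.mulVec x ∧
    Real.exp ((Δᵀ * quatToMatrix x₁ x₂ x₃ x₄).trace) =
      Real.exp (δ₁ + δ₂ + δ₃) * Real.exp (-(x ⬝ᵥ Λ.mulVec x)) := by
  have trace_eq : (Δᵀ * quatToMatrix x₁ x₂ x₃ x₄).trace = (δ₁ + δ₂ + δ₃) - x ⬝ᵥ Λ.mulVec x := by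
    rw [hΔ, hΛ, hxv, diagonal_transpose, trace_diagonal_mul_quatToMatrix, hx, mul_one]
  exact ⟨trace_eq, by rw [trace_eq, sub_eq_add_neg, Real.exp_add]⟩
end

section
/- Let q ≥ 2 be an integer and let Ω be a symmetric positive definite q × q real matrix. Then the integral of (xᵀΩx)^{−q/2} over the unit sphere S_{q−1} ⊂ ℝ^q with respect to the uniform probability measure equals (det Ω)^{−1/2}. Equivalently, the angular central Gaussian density f(x) = (det Ω)^{1/2}·(xᵀΩx)^{−q/2}, taken with respect to the uniform distribution on S_{q−1}, integrates to 1. -/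
open Matrix MeasureTheory Metric

/-!
Integrate in polar coordinates. If `N` is a positive, positively homogeneous function on an
`n`-dimensional space, then on the ray through a unit vector `x` the region `{N < 1}` is the
interval `0 < r < (N x)⁻¹`, of mass `(N x)⁻¹ ^ n / n` for `r ^ (n - 1) dr`. Hence the mean of
`N ^ (-n)` over the unit sphere is the ratio of the volumes of `{N < 1}` and of the unit ball.

A positive definite `Ω` is `Bᵀ * B` with `B` invertible, so that `xᵀΩx = ‖B x‖ ^ 2`. For
`N x = ‖B x‖` the region `{N < 1}` is the preimage of the unit ball under `B`, and the ratio of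
volumes is `|det B|⁻¹ = (det Ω) ^ (-1 / 2)`.
-/

section PolarCoordinates

open Module (finrank)

variable {E : Type*} [NormedAddCommGroup E] [NormedSpace ℝ E] [FiniteDimensional ℝ E]
  [MeasurableSpace E] [BorelSpace E] [Nontrivial E] (μ : Measure E) [μ.IsAddHaarMeasure]

lemma measure_eq_lintegral_toSphere {s : Set E} (hs : MeasurableSet s) :
    μ s = ∫⁻ x : sphere (0 : E) 1,
      Measure.volumeIoiPow (finrank ℝ E - 1) {r | r.1 • (x : E) ∈ s} ∂μ.toSphere := by
  let T : Set (sphere (0 : E) 1 × Set.Ioi (0 : ℝ)) := {p | p.2.1 • (p.1 : E) ∈ s}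
  have hT : MeasurableSet T := by
    have : Measurable fun p : sphere (0 : E) 1 × Set.Ioi (0 : ℝ) ↦ p.2.1 • (p.1 : E) := by
      fun_prop
    exact this hs
  have preimage_T : homeomorphUnitSphereProd E ⁻¹' T = Subtype.val ⁻¹' s := by
    ext ⟨x, hx⟩
    have : ‖x‖ ≠ 0 := norm_ne_zero_iff.2 hx
    simp [T, smul_inv_smul₀ this]
  calc μ s = μ.comap (Subtype.val : ({0}ᶜ : Set E) → E) (Subtype.val ⁻¹' s) := by
        rw [comap_subtype_coe_apply (measurableSet_singleton _).compl, Subtype.image_preimage_coe,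
          Set.inter_comm, ← Set.sdiff_eq, measure_sdiff_null (measure_singleton _)]
    _ = μ.toSphere.prod (Measure.volumeIoiPow (finrank ℝ E - 1)) T := by
        rw [← preimage_T,
          μ.measurePreserving_homeomorphUnitSphereProd.measure_preimage hT.nullMeasurableSet]
    _ = _ := Measure.prod_apply hT

lemma lintegral_toSphere_inv_pow_finrank {N : E → ℝ} (hN : Measurable N) (hN_pos : ∀ x ≠ 0, 0 < N x)
    (hN_smul : ∀ r > 0, ∀ x, N (r • x) = r * N x) :
    ∫⁻ x : sphere (0 : E) 1, ENNReal.ofReal ((N x)⁻¹ ^ finrank ℝ E) ∂μ.toSphere =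
      finrank ℝ E * μ {x | N x < 1} := by
  have hdim : 0 < finrank ℝ E := Module.finrank_pos
  have ray_mass (x : sphere (0 : E) 1) :
      Measure.volumeIoiPow (finrank ℝ E - 1) {r | N (r.1 • (x : E)) < 1} =
        ENNReal.ofReal ((N x)⁻¹ ^ finrank ℝ E / finrank ℝ E) := by
    have hx : 0 < N x := hN_pos x (ne_zero_of_mem_unit_sphere x)
    have ray_eq : {r : Set.Ioi (0 : ℝ) | N (r.1 • (x : E)) < 1} =
        Set.Iio ⟨(N x)⁻¹, inv_pos.2 hx⟩ := by
      ext r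
      change N (r.1 • (x : E)) < 1 ↔ r.1 < (N x)⁻¹
      rw [hN_smul r r.2, ← one_div, lt_div_iff₀ hx]
    rw [ray_eq, Measure.volumeIoiPow_apply_Iio, Nat.sub_add_cancel hdim, Nat.cast_pred hdim,
      sub_add_cancel]
  rw [measure_eq_lintegral_toSphere μ (measurableSet_lt hN measurable_const),
    ← lintegral_const_mul' _ _ (ENNReal.natCast_ne_top _)]
  refine lintegral_congr fun x ↦ ?_
  simp only [Set.mem_ofPred_eq]
  rw [ray_mass, ← ENNReal.ofReal_natCast, ← ENNReal.ofReal_mul (Nat.cast_nonneg _),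
    mul_div_cancel₀ _ (Nat.cast_ne_zero.2 hdim.ne')]

lemma average_toSphere_inv_pow_finrank {N : E → ℝ} (hN : Measurable N) (hN_pos : ∀ x ≠ 0, 0 < N x)
    (hN_smul : ∀ r > 0, ∀ x, N (r • x) = r * N x) :
    ⨍ x : sphere (0 : E) 1, (N x)⁻¹ ^ finrank ℝ E ∂μ.toSphere =
      μ.real {x | N x < 1} / μ.real (ball 0 1) := by
  have hdim : (finrank ℝ E : ℝ) ≠ 0 := Nat.cast_ne_zero.2 Module.finrank_pos.ne'
  have nonneg (x : sphere (0 : E) 1) : 0 ≤ (N x)⁻¹ ^ finrank ℝ E :=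
    pow_nonneg (inv_nonneg.2 (hN_pos x (ne_zero_of_mem_unit_sphere x)).le) _
  rw [average_eq, integral_eq_lintegral_of_nonneg_ae (.of_forall nonneg)
    (Measurable.aestronglyMeasurable (by fun_prop)),
    lintegral_toSphere_inv_pow_finrank μ hN hN_pos hN_smul, Measure.toSphere_real_apply_univ,
    ENNReal.toReal_mul, ENNReal.toReal_natCast, smul_eq_mul, inv_mul_eq_div,
    mul_div_mul_left _ _ hdim, ← measureReal_def]

lemma average_toSphere_inv_norm_linearMap_pow_finrank {L : E →ₗ[ℝ] E} (hL : LinearMap.det L ≠ 0) :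
    ⨍ x : sphere (0 : E) 1, ‖L x‖⁻¹ ^ finrank ℝ E ∂μ.toSphere = |LinearMap.det L|⁻¹ := by
  have hL_inj : Function.Injective L :=
    ((Module.End.isUnit_iff L).1 ((LinearMap.isUnit_iff_isUnit_det L).2 hL.isUnit)).injective
  have hL_pos (x : E) (hx : x ≠ 0) : 0 < ‖L x‖ :=
    norm_pos_iff.2 ((map_ne_zero_iff L hL_inj).2 hx)
  have hL_smul (r : ℝ) (hr : r > 0) (x : E) : ‖L (r • x)‖ = r * ‖L x‖ := by
    rw [map_smul, norm_smul_of_nonneg hr.le]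
  have hL_volume : μ.real {x | ‖L x‖ < 1} = |LinearMap.det L|⁻¹ * μ.real (ball 0 1) := by
    have preimage_ball : {x | ‖L x‖ < 1} = L ⁻¹' ball 0 1 := by
      ext x; simp
    rw [preimage_ball, measureReal_def, μ.addHaar_preimage_linearMap hL, ENNReal.toReal_mul,
      ENNReal.toReal_ofReal (abs_nonneg _), abs_inv, measureReal_def]
  have ball_ne_zero : μ.real (ball 0 1) ≠ 0 :=
    ENNReal.toReal_ne_zero.2 ⟨(measure_ball_pos μ 0 one_pos).ne', measure_ball_lt_top.ne⟩
  rw [average_toSphere_inv_pow_finrank μ L.continuous_of_finiteDimensional.norm.measurable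
    hL_pos hL_smul, hL_volume, mul_div_cancel_right₀ _ ball_ne_zero]

end PolarCoordinates

section QuadraticForm

variable {ι : Type*} [Fintype ι] [DecidableEq ι]

open scoped ComplexOrder MatrixOrder in
lemma exists_isUnit_eq_conjTranspose_mul_self {𝕜 : Type*} [RCLike 𝕜] {Ω : Matrix ι ι 𝕜}
    (hΩ : Ω.PosDef) : ∃ B : Matrix ι ι 𝕜, IsUnit B ∧ Ω = Bᴴ * B :=
  CStarAlgebra.isStrictlyPositive_iff_eq_star_mul_self.1 hΩ.isStrictlyPositive

lemma dotProduct_transpose_mul_self_mulVec {κ : Type*} [Fintype κ] (B : Matrix κ ι ℝ)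
    (x : EuclideanSpace ℝ ι) : x ⬝ᵥ (Bᵀ * B) *ᵥ x = ‖toEuclideanLin B x‖ ^ 2 := by
  rw [EuclideanSpace.real_norm_sq_eq, ← mulVec_mulVec, dotProduct_mulVec, vecMul_transpose]
  simp only [dotProduct, sq, toLpLin_apply]

lemma sq_rpow_neg_natCast_div_two {t : ℝ} (ht : 0 ≤ t) (n : ℕ) :
    (t ^ 2) ^ (-((n : ℝ) / 2)) = t⁻¹ ^ n := by
  rw [← Real.rpow_natCast_mul ht, inv_pow, ← Real.rpow_natCast, ← Real.rpow_neg ht]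
  congr 1
  push_cast
  ring

lemma average_toSphere_dotProduct_mulVec_rpow [Nonempty ι] {Ω : Matrix ι ι ℝ} (hΩ : Ω.PosDef) :
    ⨍ x : sphere (0 : EuclideanSpace ℝ ι) 1,
      ((x : EuclideanSpace ℝ ι) ⬝ᵥ Ω *ᵥ (x : EuclideanSpace ℝ ι))
        ^ (-((Fintype.card ι : ℝ) / 2)) ∂volume.toSphere = Ω.det ^ (-(1 : ℝ) / 2) := by
  obtain ⟨B, hB, rfl⟩ := exists_isUnit_eq_conjTranspose_mul_self hΩ
  have det_B : LinearMap.det (toEuclideanLin B) = B.det := LinearMap.det_toLpLin 2 B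
  have det_B_ne_zero : LinearMap.det (toEuclideanLin B) ≠ 0 := by
    rw [det_B]
    exact ((isUnit_iff_isUnit_det B).1 hB).ne_zero
  have det_rpow : (Bᵀ * B).det ^ (-(1 : ℝ) / 2) = |B.det|⁻¹ := by
    rw [det_mul, det_transpose, ← sq, ← sq_abs, neg_div]
    simpa using sq_rpow_neg_natCast_div_two (abs_nonneg B.det) 1
  simp_rw [conjTranspose_eq_transpose_of_trivial, dotProduct_transpose_mul_self_mulVec,
    sq_rpow_neg_natCast_div_two (norm_nonneg _)]
  rw [det_rpow, ← det_B,
    ← average_toSphere_inv_norm_linearMap_pow_finrank volume det_B_ne_zero, finrank_euclideanSpace]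

theorem stmt_14_general [Nonempty ι] {Ω : Matrix ι ι ℝ} (hΩ : Ω.PosDef) :
    (⨍ x : sphere (0 : EuclideanSpace ℝ ι) 1,
        ((x : EuclideanSpace ℝ ι) ⬝ᵥ Ω *ᵥ (x : EuclideanSpace ℝ ι))
          ^ (-((Fintype.card ι : ℝ) / 2)) ∂volume.toSphere) = Ω.det ^ (-(1 : ℝ) / 2) ∧
    (⨍ x : sphere (0 : EuclideanSpace ℝ ι) 1,
        Ω.det ^ ((1 : ℝ) / 2) *
          ((x : EuclideanSpace ℝ ι) ⬝ᵥ Ω *ᵥ (x : EuclideanSpace ℝ ι))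
            ^ (-((Fintype.card ι : ℝ) / 2)) ∂volume.toSphere) = 1 := by
  refine ⟨average_toSphere_dotProduct_mulVec_rpow hΩ, ?_⟩
  rw [average_eq', integral_const_mul, ← average_eq', average_toSphere_dotProduct_mulVec_rpow hΩ,
    ← Real.rpow_add hΩ.det_pos]
  norm_num

end QuadraticForm

/-- the angular central Gaussian normalizing constant. The integral of
`(xᵀΩx)^(−q/2)` over the unit sphere `S_{q−1} ⊂ ℝ^q`, with respect to the uniform
probability measure on the sphere, equals `(det Ω)^(−1/2)`; equivalently the ACG
density `(det Ω)^(1/2)(xᵀΩx)^(−q/2)` integrates to `1`. -/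
theorem stmt_14 (q : ℕ) (hq : 2 ≤ q)
    (Ω : Matrix (Fin q) (Fin q) ℝ) (hΩsymm : Ω.IsSymm) (hΩ : Ω.PosDef)
    (σ : Measure (sphere (0 : EuclideanSpace ℝ (Fin q)) 1))
    (hσ : σ = ((volume : Measure (EuclideanSpace ℝ (Fin q))).toSphere Set.univ)⁻¹ •
      (volume : Measure (EuclideanSpace ℝ (Fin q))).toSphere) :
    (∫ x : sphere (0 : EuclideanSpace ℝ (Fin q)) 1,
        ((x : EuclideanSpace ℝ (Fin q)) ⬝ᵥ Ω.mulVec (x : EuclideanSpace ℝ (Fin q)))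
          ^ (-((q : ℝ) / 2)) ∂σ) = Ω.det ^ (-(1 : ℝ) / 2) ∧
    (∫ x : sphere (0 : EuclideanSpace ℝ (Fin q)) 1,
        Ω.det ^ ((1 : ℝ) / 2) *
          ((x : EuclideanSpace ℝ (Fin q)) ⬝ᵥ Ω.mulVec (x : EuclideanSpace ℝ (Fin q)))
            ^ (-((q : ℝ) / 2)) ∂σ) = 1 := by
  have : NeZero q := ⟨by omega⟩
  simpa only [hσ, average, Fintype.card_fin] using stmt_14_general hΩ
end
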